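/- The subgroup C_T(C₁) = {g ∈ C₁ : TgT⁻¹ ∈ C₁} has index 3 in the Clifford group C₁, with coset decomposition C₁ = C_T(C₁) ∪ H·C_T(C₁) ∪ PH·C_T(C₁); in particular |C_T(C₁)| = 64. -/

import Mathlib

/-!
Modulo the scalars `ω = exp (iπ/4)`, which arise as `(PH)³ = ω`, the group `C₁` has a subgroup of
monomial matrices, called `Mono` below: diagonal or antidiagonal matrices whose two nonzero entries
are powers of `ω` with exponents of equal parity. There are `8 · 4 · 2 = 64` of them
(`param_injective`, `Mono_eq_range`).

The relations `H² = 1`, `P²H = HX` and `HPH = PH·m` with `m` monomial show that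
`Mono ∪ H·Mono ∪ PH·Mono` is stable under left multiplication by the generators, so it is all of
`C₁` (`C1_cases`).

It remains to see that `C_T(C₁) = Mono` (`CT_eq`). Conjugation by `T` preserves `Mono`, since it
shifts the two exponents of an antidiagonal matrix by `-1` and `1`. An element of `H·Mono` or
`PH·Mono` has a top row with two nonzero entries of equal fourth power. Conjugation by `T`
multiplies the second entry by `ω⁻¹`, hence its fourth power by `-1`, and the result violates
`C1_row`.
-/

open Matrix

noncomputable section

abbrev Mat := Matrix (Fin 2) (Fin 2) ℂ

/-- The Hadamard gate. -/
def Hg : Mat := ((Real.sqrt 2)⁻¹ : ℝ) • !![1, 1; 1, -1]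

/-- The phase gate. -/
def Pg : Mat := !![1, 0; 0, Complex.I]

/-- The π/8 gate. -/
def Tg : Mat := !![1, 0; 0, Complex.exp ((Real.pi / 4 : ℝ) * Complex.I)]

/-- The Pauli matrices. -/
def Xg : Mat := !![0, 1; 1, 0]
def Yg : Mat := !![0, -Complex.I; Complex.I, 0]
def Zg : Mat := !![1, 0; 0, -1]

/-- The set of matrices computed by circuits over {H, P}: the Clifford group C₁. -/
def C1 : Set Mat := Submonoid.closure ({Hg, Pg} : Set Mat)

/-- The subgroup C_T(C₁) = {g ∈ C₁ : T g T⁻¹ ∈ C₁}. -/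
def CT : Set Mat := {g | g ∈ C1 ∧ Tg * g * Tg⁻¹ ∈ C1}
/-! ### Eighth roots of unity and monomial matrices -/

/-- The primitive eighth root of unity `exp (iπ/4)`. -/
def om : ℂ := Complex.exp ((Real.pi / 4 : ℝ) * Complex.I)

/-- The diagonal matrix with entries `a, b`. -/
def dg (a b : ℂ) : Mat := !![a, 0; 0, b]

/-- The antidiagonal matrix with entries `a` (top right) and `b` (bottom left). -/
def ad (a b : ℂ) : Mat := !![0, a; b, 0]

/-- The monomial Clifford matrices: diagonal or antidiagonal, with nonzero entries powers of `om`
whose exponents have the same parity. Exponents are natural numbers, with repetition modulo 8. -/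
def Mono : Set Mat :=
  {g | ∃ k j : ℕ, g = dg (om ^ k) (om ^ (k + 2 * j)) ∨ g = ad (om ^ k) (om ^ (k + 2 * j))}

/-- The value of `1/√2` in `ℂ`. -/
def rt : ℂ := (((Real.sqrt 2)⁻¹ : ℝ) : ℂ)

lemma rt_sq : rt * rt = 1 / 2 := by
  unfold rt
  rw [← Complex.ofReal_mul, ← mul_inv, Real.mul_self_sqrt (by norm_num)]
  norm_num

lemma rt_ne : rt ≠ 0 := by
  intro h
  have := rt_sq
  rw [h] at this
  norm_num at this

lemma om_eq : om = rt * (1 + Complex.I) := by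
  have h : Real.sqrt 2 / 2 = (Real.sqrt 2)⁻¹ := by
    rw [← Real.sqrt_div_self]
  unfold om rt
  rw [Complex.exp_mul_I, ← Complex.ofReal_cos, ← Complex.ofReal_sin, Real.cos_pi_div_four,
    Real.sin_pi_div_four, h]
  ring

lemma om_sq : om ^ 2 = Complex.I := by
  rw [om_eq]
  linear_combination (1 + Complex.I) ^ 2 * rt_sq + (1 / 2) * Complex.I_sq

lemma om_four : om ^ 4 = -1 := by
  linear_combination (om ^ 2 + Complex.I) * om_sq + Complex.I_sq

lemma om_eight : om ^ 8 = 1 := by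
  linear_combination (om ^ 4 - 1) * om_four

lemma om_ne : om ≠ 0 := Complex.exp_ne_zero _

lemma om_prim : IsPrimitiveRoot om 8 := by
  have h := Complex.isPrimitiveRoot_exp 8 (by norm_num)
  convert h using 1
  unfold om
  congr 1
  push_cast
  ring

/-! ### Relations between the gates -/

lemma Hg_eq : Hg = !![rt, rt; rt, -rt] := by
  ext i j
  fin_cases i <;> fin_cases j <;> simp [Hg, rt]

lemma HH : Hg * Hg = 1 := by
  rw [Hg_eq]
  ext i j
  fin_cases i <;> fin_cases j <;> simp [rt_sq] <;> norm_num

lemma PPH : Pg * (Pg * Hg) = Hg * Xg := by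
  rw [Hg_eq, Pg, Xg]
  ext i j
  fin_cases i <;> fin_cases j <;> simp [← mul_assoc]

lemma HPH : Hg * (Pg * Hg) = Pg * Hg * ad (om ^ 7) om := by
  have h7 : om ^ 7 = -Complex.I * om := by
    linear_combination om * (om ^ 2 * om_four - om_sq)
  rw [h7, om_eq, Hg_eq, Pg, ad]
  ext i j
  fin_cases i <;> fin_cases j <;> simp <;> ring_nf <;> simp <;> ring

/-! ### The three cosets cover `C₁` -/

lemma Pg_mul_mem {g : Mat} (hg : g ∈ Mono) : Pg * g ∈ Mono := by
  obtain ⟨k, j, rfl | rfl⟩ := hg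
  · refine ⟨k, j + 1, Or.inl ?_⟩
    simp [Pg, dg, ← om_sq]
    ring
  · refine ⟨k, j + 1, Or.inr ?_⟩
    simp [Pg, ad, ← om_sq]
    ring

lemma Xg_mul_mem {g : Mat} (hg : g ∈ Mono) : Xg * g ∈ Mono := by
  -- Swapping the two exponents replaces the difference `2j` by `-2j`, which is `6j` modulo 8.
  have h : ∀ k j : ℕ, om ^ (k + 2 * j + 2 * (3 * j)) = om ^ k := fun k j => by
    rw [show k + 2 * j + 2 * (3 * j) = k + 8 * j by ring, pow_add, pow_mul, om_eight]
    simp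
  obtain ⟨k, j, rfl | rfl⟩ := hg
  · refine ⟨k + 2 * j, 3 * j, Or.inr ?_⟩
    rw [h]
    simp [Xg, dg, ad]
  · refine ⟨k + 2 * j, 3 * j, Or.inl ?_⟩
    rw [h]
    simp [Xg, dg, ad]

lemma smul_mem {g : Mat} (n : ℕ) (hg : g ∈ Mono) : om ^ n • g ∈ Mono := by
  obtain ⟨k, j, rfl | rfl⟩ := hg
  · refine ⟨n + k, j, Or.inl ?_⟩
    simp [dg, ← pow_add, add_assoc]
  · refine ⟨n + k, j, Or.inr ?_⟩
    simp [ad, ← pow_add, add_assoc]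

lemma ad_mul_mem {g : Mat} (hg : g ∈ Mono) : ad (om ^ 7) om * g ∈ Mono := by
  have h : ad (om ^ 7) om = om ^ 7 • (Pg * Xg) := by
    have h9 : om = om ^ 7 * Complex.I := by
      rw [← om_sq]
      linear_combination -om * om_eight
    simp [ad, Pg, Xg, ← h9]
  rw [h, smul_mul_assoc, mul_assoc]
  exact smul_mem 7 (Pg_mul_mem (Xg_mul_mem hg))

lemma one_mem_Mono : (1 : Mat) ∈ Mono := by
  refine ⟨0, 0, Or.inl ?_⟩
  simp [dg, Matrix.one_fin_two]

/-- The union of the three cosets contains `1` and is stable under left multiplication by `H`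
and `P`, hence contains `C₁`. -/
lemma C1_cases {g : Mat} (hg : g ∈ C1) :
    g ∈ Mono ∨ (∃ s ∈ Mono, g = Hg * s) ∨ (∃ s ∈ Mono, g = Pg * Hg * s) := by
  change g ∈ Submonoid.closure ({Hg, Pg} : Set Mat) at hg
  induction hg using Submonoid.closure_induction_left with
  | one => exact Or.inl one_mem_Mono
  | mul_left x hx y hy ih =>
    rcases hx with rfl | rfl
    · rcases ih with h | ⟨s, hs, rfl⟩ | ⟨s, hs, rfl⟩
      · exact Or.inr (Or.inl ⟨y, h, rfl⟩)
      · left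
        rwa [← mul_assoc, HH, one_mul]
      · refine Or.inr (Or.inr ⟨_, ad_mul_mem hs, ?_⟩)
        rw [← mul_assoc, HPH, mul_assoc]
    · rcases ih with h | ⟨s, hs, rfl⟩ | ⟨s, hs, rfl⟩
      · exact Or.inl (Pg_mul_mem h)
      · exact Or.inr (Or.inr ⟨s, hs, by rw [mul_assoc]⟩)
      · refine Or.inr (Or.inl ⟨_, Xg_mul_mem hs, ?_⟩)
        rw [← mul_assoc, PPH, mul_assoc]

/-! ### Monomial matrices lie in `C₁` -/

lemma H_mem : Hg ∈ C1 := Submonoid.subset_closure (by simp)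

lemma P_mem : Pg ∈ C1 := Submonoid.subset_closure (by simp)

lemma mul_mem_C1 {a b : Mat} (ha : a ∈ C1) (hb : b ∈ C1) : a * b ∈ C1 :=
  Submonoid.mul_mem _ ha hb

lemma pow_mem_C1 {a : Mat} (ha : a ∈ C1) (n : ℕ) : a ^ n ∈ C1 :=
  Submonoid.pow_mem _ ha n

lemma X_mem : Xg ∈ C1 := by
  have h : Xg = Hg * (Pg * (Pg * Hg)) := by
    rw [PPH, ← mul_assoc, HH, one_mul]
  rw [h]
  exact mul_mem_C1 H_mem (mul_mem_C1 P_mem (mul_mem_C1 P_mem H_mem))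

/-- The scalar `om` is the circuit `(PH)³`. -/
lemma scalar_mem : dg om om ∈ C1 := by
  have h : dg om om = Pg * Hg * (Pg * Hg) * (Pg * Hg) := by
    rw [om_eq, Hg_eq, Pg, dg]
    have h3 : rt ^ 3 = rt / 2 := by linear_combination rt * rt_sq
    ext i j
    fin_cases i <;> fin_cases j <;> simp <;> ring_nf <;> simp [h3] <;> ring
  rw [h]
  have hPH := mul_mem_C1 P_mem H_mem
  exact mul_mem_C1 (mul_mem_C1 hPH hPH) hPH

lemma dg_mul (a b c d : ℂ) : dg a b * dg c d = dg (a * c) (b * d) := by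
  simp [dg]

lemma dg_pow (a b : ℂ) (n : ℕ) : dg a b ^ n = dg (a ^ n) (b ^ n) := by
  induction n with
  | zero => simp [dg, Matrix.one_fin_two]
  | succ n ih => rw [pow_succ, ih, dg_mul, pow_succ, pow_succ]

lemma Mono_sub {g : Mat} (hg : g ∈ Mono) : g ∈ C1 := by
  have hd : ∀ k j : ℕ, dg (om ^ k) (om ^ (k + 2 * j)) ∈ C1 := fun k j => by
    have h : dg (om ^ k) (om ^ (k + 2 * j)) = dg om om ^ k * Pg ^ j := by
      rw [show Pg = dg 1 Complex.I from rfl, dg_pow, dg_pow, dg_mul, ← om_sq, ← pow_mul,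
        ← pow_add, one_pow, mul_one]
    rw [h]
    exact mul_mem_C1 (pow_mem_C1 scalar_mem k) (pow_mem_C1 P_mem j)
  obtain ⟨k, j, rfl | rfl⟩ := hg
  · exact hd k j
  · have h : ad (om ^ k) (om ^ (k + 2 * j)) = dg (om ^ k) (om ^ (k + 2 * j)) * Xg := by
      simp [ad, dg, Xg]
    rw [h]
    exact mul_mem_C1 (hd k j) X_mem

/-! ### Conjugation by `T` -/

lemma Tg_inv : Tg⁻¹ = dg 1 (om ^ 7) := by
  apply Matrix.inv_eq_right_inv
  change dg 1 om * dg 1 (om ^ 7) = 1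
  rw [dg_mul, ← pow_succ', om_eight]
  simp [dg, Matrix.one_fin_two]

lemma conj_mem {g : Mat} (hg : g ∈ Mono) : Tg * g * Tg⁻¹ ∈ Mono := by
  rw [Tg_inv, show Tg = dg 1 om from rfl]
  obtain ⟨k, j, rfl | rfl⟩ := hg
  · refine ⟨k, j, Or.inl ?_⟩
    have h : om * om ^ (k + 2 * j) * om ^ 7 = om ^ (k + 2 * j) := by
      linear_combination om ^ (k + 2 * j) * om_eight
    rw [dg_mul, dg_mul, h]
    simp
  · refine ⟨k + 7, j + 1, Or.inr ?_⟩
    have h : om ^ (k + 7 + 2 * (j + 1)) = om * om ^ (k + 2 * j) := by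
      rw [show k + 7 + 2 * (j + 1) = 8 + 1 + (k + 2 * j) by ring, pow_add, pow_add, om_eight]
      simp
    rw [h]
    simp [dg, ad, pow_add]

lemma conj_apply (g : Mat) :
    (Tg * g * Tg⁻¹) 0 0 = g 0 0 ∧ (Tg * g * Tg⁻¹) 0 1 = g 0 1 * om ^ 7 := by
  rw [Tg_inv, show Tg = dg 1 om from rfl]
  constructor <;> simp [dg, Matrix.mul_apply, Matrix.vecMul, dotProduct, Fin.sum_univ_two]

lemma om_pow_four_mul (k j : ℕ) : (om ^ (k + 2 * j)) ^ 4 = (om ^ k) ^ 4 := by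
  have h : (om ^ (k + 2 * j)) ^ 4 = (om ^ k) ^ 4 * (om ^ 8) ^ j := by
    simp only [← pow_mul, ← pow_add]
    ring_nf
  rw [h, om_eight]
  simp

/-- The entries in the top row of an element of `H·Mono` are nonzero with equal fourth powers. -/
lemma H_row {s : Mat} (hs : s ∈ Mono) :
    (Hg * s) 0 0 ≠ 0 ∧ (Hg * s) 0 1 ≠ 0 ∧ (Hg * s) 0 0 ^ 4 = (Hg * s) 0 1 ^ 4 := by
  rw [Hg_eq]
  obtain ⟨k, j, rfl | rfl⟩ := hs
  · simp [dg, Matrix.mul_apply, rt_ne, om_ne, mul_pow, om_pow_four_mul]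
  · simp [ad, Matrix.mul_apply, rt_ne, om_ne, mul_pow, om_pow_four_mul]

lemma PH_row (s : Mat) (i : Fin 2) : (Pg * Hg * s) 0 i = (Hg * s) 0 i := by
  rw [mul_assoc]
  simp [Pg, Matrix.mul_apply]

/-- In each element of `C₁` the top row has a zero entry or entries with equal fourth powers. -/
lemma C1_row {g : Mat} (hg : g ∈ C1) : g 0 0 = 0 ∨ g 0 1 = 0 ∨ g 0 0 ^ 4 = g 0 1 ^ 4 := by
  rcases C1_cases hg with ⟨k, j, rfl | rfl⟩ | ⟨s, hs, rfl⟩ | ⟨s, hs, rfl⟩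
  · simp [dg]
  · simp [ad]
  · exact Or.inr (Or.inr (H_row hs).2.2)
  · rw [PH_row, PH_row]
    exact Or.inr (Or.inr (H_row hs).2.2)

/-- Conjugation by `T` multiplies the fourth power of the top right entry by `-1`, so it moves
a matrix whose top row has nonzero entries with equal fourth powers out of `C₁`. -/
lemma conj_not_mem {g : Mat} (h0 : g 0 0 ≠ 0) (h1 : g 0 1 ≠ 0) (h : g 0 0 ^ 4 = g 0 1 ^ 4) :
    Tg * g * Tg⁻¹ ∉ C1 := by
  intro hc
  have hr := C1_row hc
  rw [(conj_apply g).1, (conj_apply g).2] at hr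
  rcases hr with hr | hr | hr
  · exact h0 hr
  · exact mul_ne_zero h1 (pow_ne_zero _ om_ne) hr
  · have h28 : (om ^ 7) ^ 4 = -1 := by
      rw [← pow_mul, show 7 * 4 = 4 * 7 by norm_num, pow_mul, om_four]
      norm_num
    rw [mul_pow, h28, h] at hr
    have : g 0 1 ^ 4 = 0 := by linear_combination hr / 2
    exact pow_ne_zero _ h1 this

lemma CT_eq : CT = Mono := by
  ext g
  constructor
  · rintro ⟨hg, hc⟩
    rcases C1_cases hg with h | ⟨s, hs, rfl⟩ | ⟨s, hs, rfl⟩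
    · exact h
    · obtain ⟨h0, h1, h⟩ := H_row hs
      exact absurd hc (conj_not_mem h0 h1 h)
    · obtain ⟨h0, h1, h⟩ := H_row hs
      rw [← PH_row, ← PH_row] at h
      rw [← PH_row] at h0 h1
      exact absurd hc (conj_not_mem h0 h1 h)
  · intro hg
    exact ⟨Mono_sub hg, Mono_sub (conj_mem hg)⟩

/-! ### Counting the monomial matrices -/

/-- The parametrization of the monomial Clifford matrices by reduced exponents; `true` selects the
diagonal ones. -/
def param (p : Fin 8 × Fin 4 × Bool) : Mat :=
  if p.2.2 then dg (om ^ (p.1 : ℕ)) (om ^ ((p.1 : ℕ) + 2 * (p.2.1 : ℕ)))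
  else ad (om ^ (p.1 : ℕ)) (om ^ ((p.1 : ℕ) + 2 * (p.2.1 : ℕ)))

lemma param_injective : Function.Injective param := by
  have key : ∀ (k k' : Fin 8) (j j' : Fin 4), om ^ (k : ℕ) = om ^ (k' : ℕ) →
      om ^ ((k : ℕ) + 2 * (j : ℕ)) = om ^ ((k' : ℕ) + 2 * (j' : ℕ)) → k = k' ∧ j = j' := by
    intro k k' j j' h1 h2
    have hk : (k : ℕ) = k' := om_prim.pow_inj k.2 k'.2 h1
    rw [pow_add, pow_add, h1] at h2
    have h3 := om_prim.pow_inj (by omega) (by omega)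
      (mul_left_cancel₀ (pow_ne_zero _ om_ne) h2)
    exact ⟨Fin.ext hk, Fin.ext (by omega)⟩
  rintro ⟨k, j, e⟩ ⟨k', j', e'⟩ h
  have h00 := congrFun (congrFun h 0) 0
  have h01 := congrFun (congrFun h 0) 1
  have h10 := congrFun (congrFun h 1) 0
  have h11 := congrFun (congrFun h 1) 1
  cases e <;> cases e' <;> simp [param, dg, ad, om_ne] at h00 h01 h10 h11
  · obtain ⟨rfl, rfl⟩ := key k k' j j' h01 h10
    rfl
  · obtain ⟨rfl, rfl⟩ := key k k' j j' h00 h11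
    rfl

lemma Mono_eq_range : Mono = Set.range param := by
  ext g
  constructor
  · rintro ⟨k, j, h⟩
    have h1 : om ^ (k % 8) = om ^ k := by
      rw [← pow_mod_orderOf om k, ← om_prim.eq_orderOf]
    have h2 : om ^ (k % 8 + 2 * (j % 4)) = om ^ (k + 2 * j) := by
      have : 2 * (j % 4) = (2 * j) % 8 := by omega
      rw [pow_add, h1, this, pow_add, ← pow_mod_orderOf om (2 * j), ← om_prim.eq_orderOf]
    have hk : k % 8 < 8 := Nat.mod_lt _ (by norm_num)
    have hj : j % 4 < 4 := Nat.mod_lt _ (by norm_num)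
    rcases h with rfl | rfl
    · exact ⟨(⟨k % 8, hk⟩, ⟨j % 4, hj⟩, true), by simp [param, h1, h2]⟩
    · exact ⟨(⟨k % 8, hk⟩, ⟨j % 4, hj⟩, false), by simp [param, h1, h2]⟩
  · rintro ⟨⟨k, j, e⟩, rfl⟩
    refine ⟨k, j, ?_⟩
    cases e <;> simp [param]

/-- C_T(C₁) has index 3 in C₁ with coset decomposition
C₁ = C_T(C₁) ∪ H·C_T(C₁) ∪ PH·C_T(C₁); in particular |C_T(C₁)| = 64. -/
theorem CT_coset_decomposition :
    Nat.card CT = 64 ∧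
    C1 = CT ∪ (fun g => Hg * g) '' CT ∪ (fun g => Pg * Hg * g) '' CT := by
  rw [CT_eq]
  constructor
  · rw [Mono_eq_range, Nat.card_range_of_injective param_injective]
    simp
  · ext g
    constructor
    · intro hg
      rcases C1_cases hg with h | ⟨s, hs, rfl⟩ | ⟨s, hs, rfl⟩
      · exact Or.inl (Or.inl h)
      · exact Or.inl (Or.inr ⟨s, hs, rfl⟩)
      · exact Or.inr ⟨s, hs, rfl⟩
    · rintro ((h | ⟨s, hs, rfl⟩) | ⟨s, hs, rfl⟩)
      · exact Mono_sub h
      · exact mul_mem_C1 H_mem (Mono_sub hs)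
      · exact mul_mem_C1 (mul_mem_C1 P_mem H_mem) (Mono_sub hs)
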